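/- arXiv:1307.4837 — 3 statements merged into one kernel-verified Lean document; each statement's English description precedes it below -/
import Mathlib

section
/- For positive integers p and q, the group G(p;q) is abelian if and only if q = 1 or p = 1 or p = q = 2. -/
/-- The word `a_{p-1} a_{p-2} ⋯ a_0` in the free group on `Option ℤ`,
where `some k` stands for the generator `a k` and `none` stands for `ω`. -/
def omegaWord (p : ℕ) : FreeGroup (Option ℤ) :=
  ((List.range p).reverse.map (fun i => FreeGroup.of (some (i : ℤ)))).prod

/-- The relators of the group `G(p;q)`:
`ω = a_{p-1}⋯a_0`, `a_{k+q} = a_k` and `a_{k+p} = ω a_k ω⁻¹` for all `k ∈ ℤ`. -/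
def gRels (p q : ℕ) : Set (FreeGroup (Option ℤ)) :=
  {FreeGroup.of none * (omegaWord p)⁻¹} ∪
    (⋃ k : ℤ, {FreeGroup.of (some (k + (q : ℤ))) * (FreeGroup.of (some k))⁻¹}) ∪
    (⋃ k : ℤ, {FreeGroup.of (some (k + (p : ℤ))) *
      (FreeGroup.of none * FreeGroup.of (some k) * (FreeGroup.of none)⁻¹)⁻¹})

/-- The group `G(p;q)`. -/
abbrev Gpq (p q : ℕ) : Type := PresentedGroup (gRels p q)

/-- image of `a_k` in `G(p;q)` -/
def gA (p q : ℕ) (k : ℤ) : Gpq p q := PresentedGroup.of (some k)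

/-- image of `ω` in `G(p;q)` -/
def gW (p q : ℕ) : Gpq p q := PresentedGroup.of none

lemma gW_eq (p q : ℕ) :
    gW p q = ((List.range p).reverse.map (fun i => gA p q (i : ℤ))).prod := by
  have h : PresentedGroup.mk (gRels p q) (FreeGroup.of none * (omegaWord p)⁻¹) = 1 := by
    apply PresentedGroup.one_of_mem
    simp [gRels]
  rw [map_mul, map_inv, mul_inv_eq_one] at h
  have h2 : gW p q = PresentedGroup.mk (gRels p q) (omegaWord p) := h
  rw [h2, omegaWord, map_list_prod, List.map_map]
  rfl

lemma gA_q (p q : ℕ) (k : ℤ) : gA p q (k + q) = gA p q k := by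
  have h : PresentedGroup.mk (gRels p q)
      (FreeGroup.of (some (k + (q : ℤ))) * (FreeGroup.of (some k))⁻¹) = 1 := by
    apply PresentedGroup.one_of_mem
    exact Or.inl (Or.inr (Set.mem_iUnion.2 ⟨k, rfl⟩))
  rw [map_mul, map_inv, mul_inv_eq_one] at h
  exact h

lemma gA_p (p q : ℕ) (k : ℤ) : gA p q (k + p) = gW p q * gA p q k * (gW p q)⁻¹ := by
  have h : PresentedGroup.mk (gRels p q)
      (FreeGroup.of (some (k + (p : ℤ))) *
      (FreeGroup.of none * FreeGroup.of (some k) * (FreeGroup.of none)⁻¹)⁻¹) = 1 := by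
    apply PresentedGroup.one_of_mem
    exact Or.inr (Set.mem_iUnion.2 ⟨k, rfl⟩)
  rw [map_mul, map_inv, mul_inv_eq_one, map_mul, map_mul, map_inv] at h
  exact h

lemma comm_of_gens (p q : ℕ) (h : ∀ i j, gA p q i * gA p q j = gA p q j * gA p q i) :
    ∀ x y : Gpq p q, x * y = y * x := by
  have key : ∀ g : Gpq p q, (∀ i, gA p q i * g = g * gA p q i) → ∀ x, x * g = g * x := by
    intro g hg x
    have hA : ∀ i, gA p q i ∈ Subgroup.centralizer {g} := fun i =>
      Subgroup.mem_centralizer_singleton_iff.2 (hg i)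
    have hx : x ∈ Subgroup.centralizer {g} := by
      have hle : (⊤ : Subgroup (Gpq p q)) ≤ Subgroup.centralizer {g} := by
        rw [← PresentedGroup.closure_range_of, Subgroup.closure_le]
        rintro _ ⟨o, rfl⟩
        cases o with
        | some k => exact hA k
        | none =>
          change gW p q ∈ Subgroup.centralizer {g}
          rw [gW_eq]
          apply Subgroup.list_prod_mem
          intro z hz
          obtain ⟨i, _, rfl⟩ := List.mem_map.1 hz
          exact hA i
      exact hle trivial
    exact Subgroup.mem_centralizer_singleton_iff.1 hx
  have h1 : ∀ i x, x * gA p q i = gA p q i * x := fun i => key _ (fun j => h j i)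
  intro x y
  exact key y (fun i => (h1 i y).symm) x

lemma all_eq_of_step {G : Type*} (f : ℤ → G) (h : ∀ k, f (k + 1) = f k) (k : ℤ) : f k = f 0 := by
  induction k using Int.induction_on with
  | zero => rfl
  | succ i ih => rw [h, ih]
  | pred i ih => rw [← ih, ← h, sub_add_cancel]

/-- `z ↦ l z + b` -/
noncomputable def aff (l : ℂ) (hl : l ≠ 0) (b : ℂ) : Equiv.Perm ℂ where
  toFun z := l * z + b
  invFun z := l⁻¹ * (z - b)
  left_inv z := by field_simp; ring
  right_inv z := by field_simp; ring

lemma not_comm (p q : ℕ) (x y : ℂ) (hx : x ≠ 1) (hy : y ≠ 1) (hxy : x * y ≠ 1)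
    (hx0 : x ≠ 0) (hy0 : y ≠ 0) (hxp : x ^ p = 1) (hyq : y ^ q = 1) :
    ¬ ∀ a b : Gpq p q, a * b = b * a := by
  intro hcomm
  have hl : x * y ≠ 0 := mul_ne_zero hx0 hy0
  have hx1 : x - 1 ≠ 0 := sub_ne_zero.2 hx
  let F : Option ℤ → Equiv.Perm ℂ := fun o => match o with
    | some k => aff (x * y) hl (y ^ k)
    | none => aff (y ^ p) (pow_ne_zero _ hy0) 0
  have hprod : ∀ (n : ℕ) (z : ℂ), FreeGroup.lift F (omegaWord n) z
      = (x * y) ^ n * z + y ^ n * (x ^ n - 1) / ((x - 1) * y) := by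
    intro n
    induction n with
    | zero => intro z; simp [omegaWord]
    | succ n ih =>
      intro z
      have : omegaWord (n + 1) = FreeGroup.of (some (n : ℤ)) * omegaWord n := by
        simp [omegaWord, List.range_succ]
      rw [this, map_mul, Equiv.Perm.mul_apply, ih, FreeGroup.lift_apply_of]
      simp only [F, aff, Equiv.coe_fn_mk, zpow_natCast]
      field_simp
      ring
  have hrel : ∀ r ∈ gRels p q, FreeGroup.lift F r = 1 := by
    rintro r ((hr | hr) | hr)
    · rw [Set.mem_singleton_iff] at hr
      subst hr
      rw [map_mul, map_inv, mul_inv_eq_one, FreeGroup.lift_apply_of]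
      ext z
      rw [hprod, hxp, mul_pow, hxp]
      simp [F, aff]
    · obtain ⟨k, hk⟩ := Set.mem_iUnion.1 hr
      rw [Set.mem_singleton_iff] at hk
      subst hk
      rw [map_mul, map_inv, mul_inv_eq_one, FreeGroup.lift_apply_of, FreeGroup.lift_apply_of]
      simp only [F, zpow_add₀ hy0, zpow_natCast, hyq, mul_one]
    · obtain ⟨k, hk⟩ := Set.mem_iUnion.1 hr
      rw [Set.mem_singleton_iff] at hk
      subst hk
      rw [map_mul, map_inv, mul_inv_eq_one, map_mul, map_mul, map_inv, FreeGroup.lift_apply_of,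
        FreeGroup.lift_apply_of, FreeGroup.lift_apply_of, eq_mul_inv_iff_mul_eq]
      ext z
      simp only [Equiv.Perm.mul_apply, F, aff, Equiv.coe_fn_mk, zpow_add₀ hy0, zpow_natCast]
      ring
  have h := congrArg (PresentedGroup.toGroup hrel) (hcomm (gA p q 0) (gA p q 1))
  have e : ∀ k, PresentedGroup.toGroup hrel (gA p q k) = F (some k) := fun k =>
    PresentedGroup.toGroup.of hrel
  rw [map_mul, map_mul, e, e] at h
  have h0 := congrArg (fun f : Equiv.Perm ℂ => f 0) h
  simp only [Equiv.Perm.mul_apply, F, aff, Equiv.coe_fn_mk, zpow_zero, zpow_one] at h0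
  have : (x * y - 1) * (y - 1) = 0 := by linear_combination h0
  rcases mul_eq_zero.1 this with h | h
  · exact hxy (sub_eq_zero.1 h)
  · exact hy (sub_eq_zero.1 h)

/-- `G(p;q)` is abelian if and only if `q = 1` or `p = 1` or `p = q = 2`. -/
theorem stmt_7 (p q : ℕ) (hp : 0 < p) (hq : 0 < q) :
    (∀ x y : Gpq p q, x * y = y * x) ↔ (q = 1 ∨ p = 1 ∨ (p = 2 ∧ q = 2)) := by
  constructor
  · intro hcomm
    by_contra hne
    push Not at hne
    obtain ⟨hq1, hp1, h22⟩ := hne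
    have hX := Complex.isPrimitiveRoot_exp p hp.ne'
    have hY := Complex.isPrimitiveRoot_exp q hq.ne'
    set x := Complex.exp (2 * Real.pi * Complex.I / p)
    set y := Complex.exp (2 * Real.pi * Complex.I / q)
    have hx1 : x ≠ 1 := hX.ne_one (by omega)
    have hy1 : y ≠ 1 := hY.ne_one (by omega)
    by_cases hxy : x * y = 1
    · have hyx : y = x⁻¹ := eq_inv_of_mul_eq_one_right hxy
      have hpq : p = q := by
        have := hX.inv
        rw [← hyx] at this
        exact this.unique hY
      subst hpq
      refine not_comm p p x x hx1 hx1 ?_ (hX.ne_zero hp.ne') (hX.ne_zero hp.ne')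
        hX.pow_eq_one hX.pow_eq_one hcomm
      intro h
      rw [← sq] at h
      have := Nat.le_of_dvd (by norm_num) (hX.dvd_of_pow_eq_one 2 h)
      have : p = 2 := by omega
      exact h22 this this
    · exact not_comm p q x y hx1 hy1 hxy (hX.ne_zero hp.ne') (hY.ne_zero hq.ne')
        hX.pow_eq_one hY.pow_eq_one hcomm
  · rintro (rfl | rfl | ⟨rfl, rfl⟩)
    · apply comm_of_gens
      have h := all_eq_of_step (gA p 1) (fun k => by simpa using gA_q p 1 k)
      intro i j
      rw [h i, h j]
    · apply comm_of_gens
      have hw : gW 1 q = gA 1 q 0 := by simp [gW_eq]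
      have hs : ∀ k, gA 1 q (k + 1) = gA 1 q 0 * gA 1 q k * (gA 1 q 0)⁻¹ := by
        intro k
        simpa [hw] using gA_p 1 q k
      have h : ∀ k, gA 1 q k = gA 1 q 0 := by
        intro k
        induction k using Int.induction_on with
        | zero => rfl
        | succ i ih => rw [hs, ih]; group
        | pred i ih =>
          have := hs (-(i : ℤ) - 1)
          rw [sub_add_cancel, ih, eq_mul_inv_iff_mul_eq] at this
          exact (mul_left_cancel this).symm
      intro i j
      rw [h i, h j]
    · apply comm_of_gens
      have hw : gW 2 2 = gA 2 2 1 * gA 2 2 0 := by simp [gW_eq, List.range_succ]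
      have hc : gA 2 2 1 * gA 2 2 0 = gA 2 2 0 * gA 2 2 1 := by
        have h1 := gA_p 2 2 0
        rw [gA_q, hw] at h1
        rw [eq_mul_inv_iff_mul_eq, ← mul_assoc] at h1
        exact (mul_right_cancel h1).symm
      have hev : ∀ k : ℤ, gA 2 2 (2 * k) = gA 2 2 0 :=
        all_eq_of_step (fun k : ℤ => gA 2 2 (2 * k)) (fun k => by
          have := gA_q 2 2 (2 * k)
          simpa [mul_add] using this)
      have hod : ∀ k : ℤ, gA 2 2 (2 * k + 1) = gA 2 2 1 := fun k => by
        have := all_eq_of_step (fun k : ℤ => gA 2 2 (2 * k + 1)) (fun k => by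
          have := gA_q 2 2 (2 * k + 1)
          rw [← this]
          congr 1
          push_cast
          ring) k
        simpa using this
      intro i j
      rcases Int.even_or_odd' i with ⟨a, rfl | rfl⟩ <;>
      rcases Int.even_or_odd' j with ⟨b, rfl | rfl⟩ <;>
      simp only [hev, hod, hc]
end

section
/- For positive integers p, q, r, the group G(p;q;r) is abelian if and only if one of the following holds: (1) gcd(p,q) = gcd(q,r) = 1; (2) p = 1; (3) gcd(p,q) = 2, gcd(q/2, r) = 1 and p = 2. -/
/-- The relators of the group `G(p;q;r)`: those of `G(p;q)` together with `ω^r = e`. -/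
def gRelsProj (p q r : ℕ) : Set (FreeGroup (Option ℤ)) :=
  gRels p q ∪ {(FreeGroup.of none) ^ r}

/-- The group `G(p;q;r)`, the quotient of `G(p;q)` by the relation `ω^r = e`. -/
abbrev Gpqr (p q r : ℕ) : Type := PresentedGroup (gRelsProj p q r)

section helpers

lemma omegaWord_eq (p : ℕ) : omegaWord p =
    ((List.range p).reverse.map (fun i : ℕ => FreeGroup.of (some (i : ℤ)))).prod := by
  have h : ∀ l : List ℕ, (do let a ← l; pure (a : ℤ) : List ℤ) = l.map (fun a : ℕ => (a : ℤ)) := by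
    intro l
    induction l with
    | nil => rfl
    | cons a l ih => simp_all [List.flatMap_cons]
  unfold omegaWord
  rw [h, List.map_map]
  rfl

/-- Generators commuting implies the presented group is abelian. -/
lemma comm_of_gens_s11 {R : Set (FreeGroup (Option ℤ))}
    (h : ∀ i j, (PresentedGroup.of i : PresentedGroup R) * PresentedGroup.of j =
      PresentedGroup.of j * PresentedGroup.of i) (x y : PresentedGroup R) : x * y = y * x := by
  have h1 : ∀ j, ∀ x : PresentedGroup R, x ∈ Subgroup.centralizer {PresentedGroup.of j} := by
    intro j x
    have : (⊤ : Subgroup (PresentedGroup R)) ≤ Subgroup.centralizer {PresentedGroup.of j} := by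
      rw [← PresentedGroup.closure_range_of, Subgroup.closure_le]
      rintro _ ⟨i, rfl⟩
      simp only [SetLike.mem_coe, Subgroup.mem_centralizer_singleton_iff]
      exact (h _ _)
    exact this trivial
  have h2 : (⊤ : Subgroup (PresentedGroup R)) ≤ Subgroup.centralizer {x} := by
    rw [← PresentedGroup.closure_range_of, Subgroup.closure_le]
    rintro _ ⟨i, rfl⟩
    have := h1 i x
    simp only [SetLike.mem_coe, Subgroup.mem_centralizer_singleton_iff] at this ⊢
    exact this.symm
  have := h2 (trivial : y ∈ ⊤)
  rw [Subgroup.mem_centralizer_singleton_iff] at this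
  exact this.symm

variable (p q r : ℕ)

/-- the generator ω -/
abbrev om : Gpqr p q r := PresentedGroup.of none
/-- the generators a_k -/
abbrev aa (k : ℤ) : Gpqr p q r := PresentedGroup.of (some k)

lemma om_pow : om p q r ^ r = 1 := by
  have : (FreeGroup.of none : FreeGroup (Option ℤ)) ^ r ∈ gRelsProj p q r := Or.inr rfl
  have := PresentedGroup.one_of_mem this
  rw [map_pow] at this
  exact this

lemma om_eq : om p q r = ((List.range p).reverse.map (fun i : ℕ => aa p q r (i : ℤ))).prod := by
  have : (FreeGroup.of none) * (omegaWord p)⁻¹ ∈ gRelsProj p q r := Or.inl (Or.inl (Or.inl rfl))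
  have := PresentedGroup.one_of_mem this
  rw [map_mul, map_inv, mul_inv_eq_one] at this
  refine Eq.trans this ?_
  rw [omegaWord_eq, map_list_prod, List.map_map]
  rfl

lemma aa_q (k : ℤ) : aa p q r (k + q) = aa p q r k := by
  have : FreeGroup.of (some (k + (q : ℤ))) * (FreeGroup.of (some k))⁻¹ ∈ gRelsProj p q r :=
    Or.inl (Or.inl (Or.inr (Set.mem_iUnion.2 ⟨k, rfl⟩)))
  have := PresentedGroup.one_of_mem this
  rw [map_mul, map_inv, mul_inv_eq_one] at this
  exact this

lemma aa_p (k : ℤ) : aa p q r (k + p) = om p q r * aa p q r k * (om p q r)⁻¹ := by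
  have : FreeGroup.of (some (k + (p : ℤ))) *
      (FreeGroup.of none * FreeGroup.of (some k) * (FreeGroup.of none)⁻¹)⁻¹ ∈ gRelsProj p q r :=
    Or.inl (Or.inr (Set.mem_iUnion.2 ⟨k, rfl⟩))
  have := PresentedGroup.one_of_mem this
  rw [map_mul, map_inv, mul_inv_eq_one, map_mul, map_mul, map_inv] at this
  exact this

lemma aa_np (n : ℕ) (k : ℤ) :
    aa p q r (k + n * p) = om p q r ^ n * aa p q r k * (om p q r ^ n)⁻¹ := by
  induction n with
  | zero => simp
  | succ n ih =>
    have : k + ((n + 1 : ℕ) : ℤ) * p = (k + n * p) + p := by push_cast; ring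
    rw [this, aa_p, ih, pow_succ']
    group

lemma aa_nq (n : ℤ) (k : ℤ) : aa p q r (k + n * q) = aa p q r k := by
  have : Function.Periodic (aa p q r) (q : ℤ) := fun k => aa_q p q r k
  exact this.int_mul n k

/-- If `q ∣ n p` and `n` is coprime to `r` then `ω` is central. -/
lemma om_central (n : ℕ) (h1 : q ∣ n * p) (h2 : Nat.Coprime n r) (k : ℤ) :
    Commute (om p q r) (aa p q r k) := by
  have c1 : Commute (om p q r ^ n) (aa p q r k) := by
    obtain ⟨s, hs⟩ := h1
    have e := aa_np p q r n k
    have : (n : ℤ) * p = s * q := by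
      have : ((n * p : ℕ) : ℤ) = (q * s : ℕ) := by rw [hs]
      push_cast at this
      linarith
    rw [this, aa_nq] at e
    exact (eq_mul_inv_iff_mul_eq.1 e).symm
  have c2 : Commute (om p q r ^ r) (aa p q r k) := by rw [om_pow]; exact Commute.one_left _
  have hb := Nat.gcd_eq_gcd_ab n r
  rw [h2] at hb
  have : om p q r = (om p q r ^ n) ^ (Nat.gcdA n r) * (om p q r ^ r) ^ (Nat.gcdB n r) := by
    rw [← zpow_natCast, ← zpow_natCast, ← zpow_mul, ← zpow_mul, ← zpow_add, ← hb]
    simp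
  rw [this]
  exact (c1.zpow_left _).mul_left (c2.zpow_left _)

lemma aa_gcd (h : ∀ k, Commute (om p q r) (aa p q r k)) (n k : ℤ) :
    aa p q r (k + n * (Nat.gcd p q : ℕ)) = aa p q r k := by
  have hq : Function.Periodic (aa p q r) (q : ℤ) := fun k => aa_q p q r k
  have hpp : Function.Periodic (aa p q r) (p : ℤ) := fun k => by
    rw [aa_p, (h k).eq, mul_inv_cancel_right]
  have : n * ((Nat.gcd p q : ℕ) : ℤ) = n * Nat.gcdA p q * p + n * Nat.gcdB p q * q := by
    rw [Nat.gcd_eq_gcd_ab]; ring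
  rw [this, ← add_assoc]
  exact (hq.int_mul (n * Nat.gcdB p q) _).trans (hpp.int_mul (n * Nat.gcdA p q) _)

lemma abelian_one (q r : ℕ) (x y : Gpqr 1 q r) : x * y = y * x := by
  have h0 : om 1 q r = aa 1 q r 0 := by rw [om_eq]; simp
  have h : ∀ k, aa 1 q r k = om 1 q r := by
    intro k
    induction k using Int.induction_on with
    | zero => exact h0.symm
    | succ n ih =>
      have := aa_p 1 q r n
      rw [ih] at this
      simpa using this
    | pred n ih =>
      have := aa_p 1 q r (-n - 1)
      simp only [Nat.cast_one, sub_add_cancel] at this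
      rw [ih] at this
      have h2 := eq_mul_inv_iff_mul_eq.1 this
      exact (mul_left_cancel h2).symm
  refine comm_of_gens_s11 ?_ x y
  rintro (_ | i) (_ | j)
  · rfl
  · have := h j; simp only [aa, om] at this; rw [this]
  · have := h i; simp only [aa, om] at this; rw [this]
  · have := h i; have h3 := h j; simp only [aa, om] at this h3; rw [this, h3]

lemma abelian_cop (h1 : Nat.gcd p q = 1) (h2 : Nat.gcd q r = 1) (x y : Gpqr p q r) :
    x * y = y * x := by
  have hc := om_central p q r q (Dvd.intro _ rfl) h2
  have ha : ∀ k, aa p q r k = aa p q r 0 := by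
    intro k
    have := aa_gcd p q r hc k 0
    rwa [h1, Nat.cast_one, mul_one, zero_add] at this
  refine comm_of_gens_s11 ?_ x y
  rintro (_ | i) (_ | j)
  · rfl
  · exact hc j
  · exact (hc i).symm
  · have := ha i; have h3 := ha j; simp only [aa] at this h3; rw [this, h3]

lemma abelian_two (h1 : Nat.gcd 2 q = 2) (h2 : Nat.gcd (q / 2) r = 1) (x y : Gpqr 2 q r) :
    x * y = y * x := by
  have h2q : 2 ∣ q := h1 ▸ Nat.gcd_dvd_right 2 q
  have hc := om_central 2 q r (q / 2) (by rw [Nat.div_mul_cancel h2q]) h2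
  have ha : ∀ k, aa 2 q r k = aa 2 q r (k % 2) := by
    intro k
    have := aa_gcd 2 q r hc (k / 2) (k % 2)
    rw [h1] at this
    rw [← this]
    congr 2
    push_cast
    omega
  have h0 : om 2 q r = aa 2 q r 1 * aa 2 q r 0 := by
    rw [om_eq]; simp [List.range_succ]
  have h10 : Commute (aa 2 q r 1) (aa 2 q r 0) := by
    have := hc 0
    rw [h0] at this
    have h3 : aa 2 q r 1 = (aa 2 q r 1 * aa 2 q r 0) * (aa 2 q r 0)⁻¹ := by group
    rw [h3]
    exact this.mul_left (Commute.refl _).inv_left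
  refine comm_of_gens_s11 ?_ x y
  rintro (_ | i) (_ | j)
  · rfl
  · exact hc j
  · exact (hc i).symm
  · have h4 := ha i
    have h3 := ha j
    change aa 2 q r i * aa 2 q r j = aa 2 q r j * aa 2 q r i
    rw [h4, h3]
    rcases Int.emod_two_eq_zero_or_one i with e | e <;>
    rcases Int.emod_two_eq_zero_or_one j with e' | e' <;> rw [e, e']
    · exact h10.symm
    · exact h10

/-- images of the generators -/
def ff {H : Type*} [Group H] (d : ℕ) (m : ℤ) (W : H) (g : ℕ → H) (k : ℤ) : H :=
  W ^ (m * (k / d)) * g (k % d).toNat * (W ^ (m * (k / d)))⁻¹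

lemma ff_add {H : Type*} [Group H] (d : ℕ) (hd : 0 < d) (m : ℤ) (W : H) (g : ℕ → H) (k n : ℤ) :
    ff d m W g (k + d * n) = W ^ (m * n) * ff d m W g k * (W ^ (m * n))⁻¹ := by
  unfold ff
  have hd' : (d : ℤ) ≠ 0 := by positivity
  rw [Int.add_mul_ediv_left _ _ hd', Int.add_mul_emod_self_left,
    show m * (k / d + n) = m * n + m * (k / d) by ring, zpow_add]
  group

lemma ff_small {H : Type*} [Group H] (d : ℕ) (m : ℤ) (W : H) (g : ℕ → H) (i : ℕ)
    (hi : i < d) : ff d m W g i = g i := by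
  unfold ff
  rw [Int.ediv_eq_zero_of_lt (by positivity) (by exact_mod_cast hi),
    Int.emod_eq_of_lt (by positivity) (by exact_mod_cast hi)]
  simp

/-- descending product -/
def dprod {H : Type*} [Group H] (f : ℤ → H) (n : ℕ) : H :=
  ((List.range n).reverse.map (fun i : ℕ => f (i : ℤ))).prod

lemma dprod_succ {H : Type*} [Group H] (f : ℤ → H) (n : ℕ) :
    dprod f (n + 1) = f n * dprod f n := by
  simp [dprod, List.range_succ]

lemma dprod_zero {H : Type*} [Group H] (f : ℤ → H) : dprod f 0 = 1 := by
  simp [dprod]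

lemma dprod_ff {H : Type*} [Group H] (d : ℕ) (hd : 0 < d) (m : ℤ) (W : H) (g : ℕ → H) (n : ℕ) :
    dprod (ff d m W g) (d * n) =
      W ^ (m * n) * (W ^ (-m) * dprod (ff d m W g) d) ^ n := by
  induction n with
  | zero => simp [dprod_zero]
  | succ n ih =>
    have key : ∀ j : ℕ, dprod (ff d m W g) (d * n + j) =
        W ^ (m * n) * dprod (ff d m W g) j * (W ^ (m * n))⁻¹ * dprod (ff d m W g) (d * n) := by
      intro j
      induction j with
      | zero => simp [dprod_zero]
      | succ j ihj =>
        rw [← add_assoc, dprod_succ, ihj, dprod_succ]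
        have : (((d * n + j : ℕ)) : ℤ) = j + d * n := by push_cast; ring
        rw [this, ff_add d hd]
        group
    rw [mul_add_one, key, ih, pow_succ',
      show m * ((n + 1 : ℕ) : ℤ) = m * n + m by push_cast; ring, zpow_add, zpow_neg]
    simp only [mul_assoc, inv_mul_cancel_left, mul_inv_cancel_left]

lemma exists_hom {H : Type*} [Group H] (d p' q' : ℕ) (hd : 0 < d) (m : ℤ)
    (hp : p = d * p') (hq : q = d * q')
    (W : H) (g : ℕ → H) (hm : (q' : ℤ) ∣ m * p' - 1) (hWq : W ^ q' = 1) (hWr : W ^ r = 1)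
    (hz : (W ^ (-m) * dprod (ff d m W g) d) ^ p' = 1) :
    ∃ φ : Gpqr p q r →* H, φ (om p q r) = W ∧ ∀ i : ℕ, i < d → φ (aa p q r i) = g i := by
  have hWz : ∀ n : ℤ, (q' : ℤ) ∣ n → W ^ n = 1 := by
    rintro _ ⟨s, rfl⟩
    rw [zpow_mul, zpow_natCast, hWq, one_zpow]
  have hWm : W ^ (m * p') = W := by
    have := hWz _ hm
    rw [zpow_sub, zpow_one, mul_inv_eq_one] at this
    exact this
  let F : Option ℤ → H := fun o => o.elim W (ff d m W g)
  have hF : ∀ x ∈ gRelsProj p q r, FreeGroup.lift F x = 1 := by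
    rintro x (((h | h) | h) | h)
    · rw [Set.mem_singleton_iff] at h
      subst h
      rw [map_mul, map_inv, mul_inv_eq_one, omegaWord_eq, map_list_prod, List.map_map]
      have : ((List.range p).reverse.map (⇑(FreeGroup.lift F) ∘
          fun i : ℕ => FreeGroup.of (some (i : ℤ)))).prod = dprod (ff d m W g) p := by
        unfold dprod
        congr 2
        funext i
        simp [F]
      rw [this, hp, dprod_ff d hd, hz, hWm]
      simp [F]
    · obtain ⟨k, h⟩ := Set.mem_iUnion.1 h
      rw [Set.mem_singleton_iff] at h
      subst h
      rw [map_mul, map_inv, mul_inv_eq_one]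
      simp only [FreeGroup.lift_apply_of, F, Option.elim]
      rw [hq, Nat.cast_mul, ff_add d hd, hWz _ (Dvd.intro_left _ rfl)]
      simp
    · obtain ⟨k, h⟩ := Set.mem_iUnion.1 h
      rw [Set.mem_singleton_iff] at h
      subst h
      rw [map_mul, map_inv, mul_inv_eq_one]
      simp only [FreeGroup.lift_apply_of, F, Option.elim, map_mul, map_inv]
      rw [hp, Nat.cast_mul, ff_add d hd, hWm]
    · rw [Set.mem_singleton_iff] at h
      subst h
      simp [F, hWr]
  refine ⟨PresentedGroup.toGroup hF, ?_, ?_⟩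
  · simp [om, F]
  · intro i hi
    simp only [aa, PresentedGroup.toGroup.of, F, Option.elim]
    exact ff_small d m W g i hi

lemma exists_noncomm (n m : ℕ) (hn : n ≠ 1) (hm : m ≠ 1) :
    ∃ x y : Equiv.Perm (ZMod n × ZMod m), x ^ n = 1 ∧ y ^ m = 1 ∧ ¬ Commute x y := by
  have : Nontrivial (ZMod n) := ZMod.nontrivial_iff.2 hn
  have : Nontrivial (ZMod m) := ZMod.nontrivial_iff.2 hm
  let x : Equiv.Perm (ZMod n × ZMod m) :=
    ⟨fun t => (t.1 + 1, t.2), fun t => (t.1 - 1, t.2), fun t => by simp, fun t => by simp⟩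
  let y : Equiv.Perm (ZMod n × ZMod m) :=
    ⟨fun t => (t.1, if t.1 = 0 then t.2 + 1 else t.2),
     fun t => (t.1, if t.1 = 0 then t.2 - 1 else t.2),
     fun t => by ext <;> simp; split_ifs <;> simp, fun t => by ext <;> simp; split_ifs <;> simp⟩
  have hx : ∀ (k : ℕ) t, (x ^ k) t = (t.1 + k, t.2) := by
    intro k t
    induction k with
    | zero => simp
    | succ k ih => rw [pow_succ', Equiv.Perm.mul_apply, ih]; simp [x, add_assoc]
  have hy : ∀ (k : ℕ) t, (y ^ k) t = (t.1, if t.1 = 0 then t.2 + k else t.2) := by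
    intro k t
    induction k with
    | zero => simp
    | succ k ih =>
      rw [pow_succ', Equiv.Perm.mul_apply, ih]
      simp only [y, Equiv.coe_fn_mk]
      split_ifs <;> simp [add_assoc]
  refine ⟨x, y, ?_, ?_, ?_⟩
  · ext t <;> simp [hx]
  · ext t <;> simp [hy]
  · intro h
    have := congrArg (fun e : Equiv.Perm (ZMod n × ZMod m) => e (0, 0)) h.eq
    simp [x, y, Equiv.Perm.mul_apply] at this

end helpers

/-- `G(p;q;r)` is abelian if and only if `gcd(p,q) = gcd(q,r) = 1`, or `p = 1`, or
`gcd(p,q) = 2`, `gcd(q/2,r) = 1` and `p = 2`. -/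
theorem stmt_11 (p q r : ℕ) (hp : 0 < p) (hq : 0 < q) (hr : 0 < r) :
    (∀ x y : Gpqr p q r, x * y = y * x) ↔
      ((Nat.gcd p q = 1 ∧ Nat.gcd q r = 1) ∨ p = 1 ∨
        (Nat.gcd p q = 2 ∧ Nat.gcd (q / 2) r = 1 ∧ p = 2)) := by
  constructor
  · intro hab
    set d := Nat.gcd p q with hd
    have hd0 : 0 < d := Nat.gcd_pos_of_pos_left _ hp
    obtain ⟨p', hp'⟩ : d ∣ p := Nat.gcd_dvd_left p q
    obtain ⟨q', hq'⟩ : d ∣ q := Nat.gcd_dvd_right p q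
    have hcop : Nat.Coprime p' q' := by
      have := Nat.coprime_div_gcd_div_gcd (m := p) (n := q) hd0
      rw [← hd] at this
      rwa [Nat.div_eq_of_eq_mul_right hd0 hp', Nat.div_eq_of_eq_mul_right hd0 hq'] at this
    obtain ⟨m, hm⟩ : ∃ m : ℤ, (q' : ℤ) ∣ m * p' - 1 := by
      refine ⟨Nat.gcdA p' q', -Nat.gcdB p' q', ?_⟩
      have := Nat.gcd_eq_gcd_ab p' q'
      rw [hcop] at this
      push_cast at this
      linarith
    have key : ∀ {H : Type} [Group H] (W : H) (g : ℕ → H), W ^ q' = 1 → W ^ r = 1 →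
        (W ^ (-m) * dprod (ff d m W g) d) ^ p' = 1 →
        (∀ i < d, Commute W (g i)) ∧ (∀ i < d, ∀ j < d, Commute (g i) (g j)) := by
      intro H _ W g h1 h2 h3
      obtain ⟨φ, hW, hg⟩ := exists_hom p q r d p' q' hd0 m hp' hq' W g hm h1 h2 h3
      constructor
      · intro i hi
        rw [← hW, ← hg i hi]
        exact Commute.map (hab _ _) φ
      · intro i hi j hj
        rw [← hg i hi, ← hg j hj]
        exact Commute.map (hab _ _) φ
    have hpow : ∀ {H : Type} [Group H] (W : H), W ^ (Nat.gcd q' r) = 1 → W ^ q' = 1 ∧ W ^ r = 1 := by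
      intro H _ W h
      exact ⟨orderOf_dvd_iff_pow_eq_one.1 ((orderOf_dvd_of_pow_eq_one h).trans (Nat.gcd_dvd_left _ _)),
        orderOf_dvd_iff_pow_eq_one.1 ((orderOf_dvd_of_pow_eq_one h).trans (Nat.gcd_dvd_right _ _))⟩
    have hp'0 : p' ≠ 0 := by rintro rfl; omega
    clear_value d
    rcases (by omega : d = 1 ∨ d = 2 ∨ 3 ≤ d) with h1 | h2 | h3
    · subst h1
      rw [one_mul] at hp' hq'
      subst hp' hq'
      by_cases hc : Nat.gcd q r = 1
      · exact Or.inl ⟨rfl, hc⟩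
      by_cases hp1 : p = 1
      · exact Or.inr (Or.inl hp1)
      exfalso
      obtain ⟨x, y, hx, hy, hxy⟩ := exists_noncomm (Nat.gcd q r) p hc hp1
      have := (key x (fun _ => x ^ m * y) (hpow x hx).1 (hpow x hx).2 (by
        rw [dprod_succ, dprod_zero, ff_small _ _ _ _ _ (by norm_num)]
        simpa using hy)).1 0 (by norm_num)
      apply hxy
      have h5 : y = (x ^ m)⁻¹ * (x ^ m * y) := by group
      rw [h5]
      exact (((Commute.refl x).zpow_right m).inv_right).mul_right this
    · subst h2
      have hdp : ∀ {H : Type} [Group H] (W : H) (g : ℕ → H),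
          dprod (ff 2 m W g) 2 = g 1 * g 0 := by
        intro H _ W g
        rw [dprod_succ, dprod_succ, dprod_zero, ff_small _ _ _ _ _ (by norm_num),
          ff_small _ _ _ _ _ (by norm_num), mul_one]
      have hq2 : q / 2 = q' := by omega
      by_cases hp1 : p' = 1
      · by_cases hc : Nat.gcd q' r = 1
        · exact Or.inr (Or.inr ⟨rfl, by rw [hq2]; exact hc, by omega⟩)
        exfalso
        obtain ⟨x, y, hx, hy, hxy⟩ := exists_noncomm (Nat.gcd q' r) 2 hc (by norm_num)
        have := (key x (fun i => if i = 0 then y⁻¹ * x ^ m else y)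
          (hpow x hx).1 (hpow x hx).2 (by rw [hdp]; simp)).1 1 (by norm_num)
        exact hxy (by simpa using this)
      · exfalso
        obtain ⟨x, y, hx, hy, hxy⟩ := exists_noncomm p' 2 hp1 (by norm_num)
        have := (key 1 (fun i => if i = 0 then y⁻¹ * x else y)
          (one_pow _) (one_pow _) (by rw [hdp]; simpa using hx)).2 0 (by norm_num) 1 (by norm_num)
        simp only [if_true, one_ne_zero, if_false] at this
        apply hxy
        have h5 : x = y * (y⁻¹ * x) := by group
        rw [h5]
        exact (Commute.refl y).mul_left this
    · exfalso
      obtain ⟨x, y, hx, hy, hxy⟩ := exists_noncomm 2 2 (by norm_num) (by norm_num)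
      let g : ℕ → Equiv.Perm (ZMod 2 × ZMod 2) := fun i =>
        if i = 0 then (y * x)⁻¹ else if i = 1 then x else if i = 2 then y else 1
      have hprod : ∀ n : ℕ, n + 3 ≤ d → dprod (ff d m 1 g) (n + 3) = 1 := by
        intro n
        induction n with
        | zero =>
          intro hn
          rw [dprod_succ, dprod_succ, dprod_succ, dprod_zero, ff_small _ _ _ _ _ (by omega),
            ff_small _ _ _ _ _ (by omega), ff_small _ _ _ _ _ (by omega)]
          simp [g]
        | succ n ih =>
          intro hn
          rw [show n + 1 + 3 = (n + 3) + 1 by ring, dprod_succ, ih (by omega),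
            ff_small _ _ _ _ _ (by omega)]
          simp [g]
      have hpd := hprod (d - 3) (by omega)
      rw [Nat.sub_add_cancel h3] at hpd
      have := (key 1 g (one_pow _) (one_pow _) (by rw [hpd]; simp)).2 1 (by omega) 2 (by omega)
      exact hxy (by simpa [g] using this)
  · rintro (⟨h1, h2⟩ | rfl | ⟨h1, h2, rfl⟩)
    · exact abelian_cop p q r h1 h2
    · exact abelian_one q r
    · exact abelian_two q r h1 h2
end

section
/- Let q and r be positive integers such that q is even (so gcd(2,q) = 2) and gcd(q/2, r) = 1. Then the group G(2;q;r) is isomorphic to ℤ × ℤ/rℤ. -/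
theorem aux_comm {G : Type*} [Group G] (m r : ℕ) (hco : Nat.gcd m r = 1) (a : ℤ → G) (w : G)
    (h1 : w = a 1 * a 0) (h2 : ∀ k : ℤ, a (k + 2 * m) = a k)
    (h3 : ∀ k : ℤ, a (k + 2) = w * a k * w⁻¹) (h4 : w ^ r = 1) :
    ∀ k : ℤ, Commute w (a k) := by
  intro k
  have h5 : ∀ n : ℕ, a (k + 2 * n) = w ^ n * a k * (w ^ n)⁻¹ := by
    intro n
    induction n with
    | zero => simp
    | succ n ih =>
      have e : k + 2 * ((n + 1 : ℕ) : ℤ) = (k + 2 * n) + 2 := by push_cast; ring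
      rw [e, h3, ih, pow_succ']
      group
  have h6 : Commute (w ^ m) (a k) := by
    have h := h5 m
    rw [h2] at h
    exact (eq_mul_inv_iff_mul_eq.mp h).symm
  have hb := Nat.gcd_eq_gcd_ab m r
  rw [hco] at hb
  have hw : w = (w ^ m) ^ (Nat.gcdA m r) := by
    calc w = w ^ (1 : ℤ) := (zpow_one w).symm
      _ = w ^ ((m : ℤ) * Nat.gcdA m r + r * Nat.gcdB m r) := by rw [← hb]; rfl
      _ = _ := by rw [zpow_add, zpow_mul, zpow_mul, zpow_natCast, zpow_natCast, h4, one_zpow, mul_one]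
  rw [hw]
  exact h6.zpow_left _

theorem aux_const {G : Type*} [Group G] (a : ℤ → G) (h : ∀ k : ℤ, a (k + 2) = a k) (b n : ℤ) :
    a (b + 2 * n) = a b := by
  induction n with
  | zero => simp
  | succ i ih => rw [← ih, ← h (b + 2 * i)]; congr 1; ring
  | pred i ih => rw [← ih, ← h (b + 2 * (-i - 1))]; congr 1; ring

def genImg (r : ℕ) : Option ℤ → Multiplicative (ℤ × ZMod r)
  | none => Multiplicative.ofAdd (0, 1)
  | some k => if Even k then Multiplicative.ofAdd (1, 0) else Multiplicative.ofAdd (-1, 1)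

theorem genImg_rels (q r : ℕ) (heven : Even q) :
    ∀ x ∈ gRelsProj 2 q r, FreeGroup.lift (genImg r) x = 1 := by
  have hq : Even (q : ℤ) := by exact_mod_cast heven
  intro x hx
  simp only [gRelsProj, gRels, Set.mem_union, Set.mem_iUnion, Set.mem_singleton_iff] at hx
  rcases hx with ((rfl | ⟨k, rfl⟩) | ⟨k, rfl⟩) | rfl
  · simp [omegaWord, List.range_succ, genImg, ← ofAdd_add, ← ofAdd_neg]
  · simp [genImg, Int.even_add, hq]
  · simp [genImg, Int.even_add]
  · simp only [map_pow, FreeGroup.lift_apply_of, genImg, ← ofAdd_nsmul]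
    simp

/-- If `q` is even (so that `gcd(2,q) = 2`) and `gcd(q/2,r) = 1`, then `G(2;q;r)` is
isomorphic to `ℤ × ℤ/rℤ`. -/
theorem stmt_14 (q r : ℕ) (hq : 0 < q) (hr : 0 < r) (heven : Even q)
    (hco : Nat.gcd (q / 2) r = 1) :
    Nonempty (Gpqr 2 q r ≃* Multiplicative (ℤ × ZMod r)) := by
  obtain ⟨m, rfl⟩ := heven
  have hm : (m + m) / 2 = m := by omega
  rw [hm] at hco
  let f : Gpqr 2 (m + m) r →* Multiplicative (ℤ × ZMod r) :=
    PresentedGroup.toGroup (genImg_rels (m + m) r ⟨m, rfl⟩)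
  let a : ℤ → Gpqr 2 (m + m) r := fun k => PresentedGroup.of (some k)
  let w : Gpqr 2 (m + m) r := PresentedGroup.of none
  have fa0 : f (a 0) = Multiplicative.ofAdd (1, 0) := by
    simp [f, a, genImg]
  have fw : f w = Multiplicative.ofAdd (0, 1) := by
    simp [f, w, genImg]
  have rel : ∀ x ∈ gRelsProj 2 (m + m) r, PresentedGroup.mk (gRelsProj 2 (m + m) r) x = 1 :=
    fun x hx => PresentedGroup.one_of_mem hx
  have h1 : w = a 1 * a 0 := by
    have := rel (FreeGroup.of none * (omegaWord 2)⁻¹) (by simp [gRelsProj, gRels])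
    rw [map_mul, map_inv, mul_inv_eq_one] at this
    refine this.trans ?_
    simp [omegaWord, List.range_succ, a, PresentedGroup.of]
  have h2 : ∀ k : ℤ, a (k + 2 * m) = a k := by
    intro k
    have := rel (FreeGroup.of (some (k + ((m + m : ℕ) : ℤ))) * (FreeGroup.of (some k))⁻¹)
      (Or.inl (Or.inl (Or.inr (Set.mem_iUnion.mpr ⟨k, rfl⟩))))
    rw [map_mul, map_inv, mul_inv_eq_one] at this
    have e : k + 2 * (m : ℤ) = k + ((m + m : ℕ) : ℤ) := by push_cast; ring
    rw [e]
    exact this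
  have h3 : ∀ k : ℤ, a (k + 2) = w * a k * w⁻¹ := by
    intro k
    have := rel (FreeGroup.of (some (k + ((2 : ℕ) : ℤ))) *
      (FreeGroup.of none * FreeGroup.of (some k) * (FreeGroup.of none)⁻¹)⁻¹)
      (Or.inl (Or.inr (Set.mem_iUnion.mpr ⟨k, rfl⟩)))
    rw [map_mul, map_inv, mul_inv_eq_one, map_mul, map_mul, map_inv] at this
    exact this
  have h4 : w ^ r = 1 := by
    have := rel ((FreeGroup.of none) ^ r) (Or.inr rfl)
    rw [map_pow] at this
    exact this
  have hc := aux_comm m r hco a w h1 h2 h3 h4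
  have hper : ∀ k : ℤ, a (k + 2) = a k := by
    intro k
    rw [h3, (hc k).eq, mul_inv_cancel_right]
  have c0 : Commute (a 0) w := (hc 0).symm
  have nf : ∀ x : Gpqr 2 (m + m) r, ∃ n k : ℤ, x = a 0 ^ n * w ^ k := by
    intro x
    have hx : x ∈ Subgroup.closure (Set.range (PresentedGroup.of (rels := gRelsProj 2 (m + m) r))) := by
      rw [PresentedGroup.closure_range_of]; trivial
    induction hx using Subgroup.closure_induction with
    | mem x hx =>
      obtain ⟨y, rfl⟩ := hx
      cases y with
      | none => exact ⟨0, 1, by simp [w]⟩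
      | some k =>
        rcases Int.even_or_odd' k with ⟨j, rfl | rfl⟩
        · refine ⟨1, 0, ?_⟩
          have := aux_const a hper 0 j
          rw [zero_add] at this
          simpa using this
        · refine ⟨-1, 1, ?_⟩
          have := aux_const a hper 1 j
          rw [add_comm 1 (2 * j)] at this
          refine this.trans ?_
          rw [zpow_neg_one, zpow_one, c0.inv_left.eq, h1, mul_inv_cancel_right]
    | one => exact ⟨0, 0, by simp⟩
    | mul x y _ _ hx hy =>
      obtain ⟨n, k, rfl⟩ := hx
      obtain ⟨n', k', rfl⟩ := hy
      refine ⟨n + n', k + k', ?_⟩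
      rw [zpow_add, zpow_add]
      exact (c0.zpow_zpow n' k).symm.mul_mul_mul_comm _ _
    | inv x _ hx =>
      obtain ⟨n, k, rfl⟩ := hx
      refine ⟨-n, -k, ?_⟩
      rw [(c0.zpow_zpow n k).eq, mul_inv_rev, zpow_neg, zpow_neg]
  have fnk : ∀ n k : ℤ, f (a 0 ^ n * w ^ k) = Multiplicative.ofAdd (n, (k : ZMod r)) := by
    intro n k
    rw [map_mul, map_zpow, map_zpow, fa0, fw, ← ofAdd_zsmul, ← ofAdd_zsmul, ← ofAdd_add]
    simp
  refine ⟨MulEquiv.ofBijective f ⟨?_, ?_⟩⟩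
  · rw [injective_iff_map_eq_one]
    intro x hx
    obtain ⟨n, k, rfl⟩ := nf x
    rw [fnk, ofAdd_eq_one, Prod.mk_eq_zero] at hx
    obtain ⟨rfl, hk⟩ := hx
    replace hk := (CharP.intCast_eq_zero_iff (ZMod r) r k).mp hk
    obtain ⟨j, rfl⟩ := hk
    rw [zpow_zero, one_mul, zpow_mul, zpow_natCast, h4, one_zpow]
  · intro y
    obtain ⟨k, hk⟩ := ZMod.intCast_surjective (Multiplicative.toAdd y).2
    refine ⟨a 0 ^ (Multiplicative.toAdd y).1 * w ^ k, ?_⟩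
    rw [fnk, hk]
    rfl
end
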